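/- Let a signed digraph be structurally unbalanced and contain a directed spanning tree. Then rank(L_s) = rank(L_{e_s}) if and only if the digraph contains a SUB-rooted SCC or a root node. Moreover, in that case the common rank is N if the digraph contains a SUB-rooted SCC, and N − 1 if the digraph contains a root node. -/

import Mathlib

open Matrix

/-- The signed incidence matrix of a signed digraph. -/
def Es {N M : ℕ} (head tail : Fin M → Fin N) (σ : Fin M → ℝ) : Matrix (Fin N) (Fin M) ℝ :=
  Matrix.of fun i k => if i = head k then 1 else if i = tail k then -σ k else 0

/-- The signed in-incidence matrix of a signed digraph. -/
def Ein {N M : ℕ} (head tail : Fin M → Fin N) (σ : Fin M → ℝ) : Matrix (Fin N) (Fin M) ℝ :=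
  Matrix.of fun i k => if i = tail k then -σ k else 0

/-- The signed Laplacian `L_s = E_{s⊙} E_sᵀ`. -/
def Ls {N M : ℕ} (head tail : Fin M → Fin N) (σ : Fin M → ℝ) : Matrix (Fin N) (Fin N) ℝ :=
  Ein head tail σ * (Es head tail σ)ᵀ

/-- The signed edge Laplacian `L_{e_s} = E_sᵀ E_{s⊙}`. -/
def Les {N M : ℕ} (head tail : Fin M → Fin N) (σ : Fin M → ℝ) : Matrix (Fin M) (Fin M) ℝ :=
  (Es head tail σ)ᵀ * Ein head tail σ

/-- Node `b` is reachable from node `a`. -/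
def Reaches {N M : ℕ} (head tail : Fin M → Fin N) : Fin N → Fin N → Prop :=
  Relation.ReflTransGen fun a b => ∃ k, head k = a ∧ tail k = b

/-- The digraph contains a directed spanning tree. -/
def HasSpanningTree {N M : ℕ} (head tail : Fin M → Fin N) : Prop :=
  ∃ r, ∀ b, Reaches head tail r b

/-- A root node: a node that is the tail of no edge. -/
def IsRootNode {N M : ℕ} (tail : Fin M → Fin N) (i : Fin N) : Prop :=
  ∀ k, tail k ≠ i

/-- Structural balance of a signed digraph. -/
def StructBalanced {N M : ℕ} (head tail : Fin M → Fin N) (σ : Fin M → ℝ) : Prop :=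
  ∃ d : Fin N → ℝ, (∀ i, d i = 1 ∨ d i = -1) ∧ ∀ k, d (head k) * d (tail k) = σ k

/-- A rooted strongly connected component. -/
def IsRootedSCC {N M : ℕ} (head tail : Fin M → Fin N) (S : Finset (Fin N)) : Prop :=
  2 ≤ S.card ∧ (∀ k, tail k ∈ S → head k ∈ S) ∧
    ∀ a ∈ S, ∀ b ∈ S, Reaches head tail a b

/-- Structural balance of a rooted SCC. -/
def SCCBalanced {N M : ℕ} (head tail : Fin M → Fin N) (σ : Fin M → ℝ)
    (S : Finset (Fin N)) : Prop :=
  ∃ d : Fin N → ℝ, (∀ i ∈ S, d i = 1 ∨ d i = -1) ∧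
    ∀ k, head k ∈ S → tail k ∈ S → d (head k) * d (tail k) = σ k


lemma aux_rank_nullity {m n : ℕ} (A : Matrix (Fin m) (Fin n) ℝ) :
    A.rank + Module.finrank ℝ (LinearMap.ker A.mulVecLin) = n := by
  have h := LinearMap.finrank_range_add_finrank_ker A.mulVecLin
  rw [Module.finrank_fin_fun] at h
  exact h

lemma aux_rank_full {m n : ℕ} (A : Matrix (Fin m) (Fin n) ℝ)
    (h : ∀ x, A *ᵥ x = 0 → x = 0) : A.rank = n := by
  have h1 := aux_rank_nullity A
  have h2 : LinearMap.ker A.mulVecLin = ⊥ := by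
    rw [LinearMap.ker_eq_bot']
    intro x hx
    exact h x (by simpa using hx)
  rw [h2, finrank_bot] at h1
  simpa using h1

lemma aux_rank_lt {m n : ℕ} (A : Matrix (Fin m) (Fin n) ℝ)
    (x : Fin n → ℝ) (hx : x ≠ 0) (h : A *ᵥ x = 0) : A.rank + 1 ≤ n := by
  have h1 := aux_rank_nullity A
  have h2 : 0 < Module.finrank ℝ (LinearMap.ker A.mulVecLin) := by
    apply Module.finrank_pos_iff_exists_ne_zero.2
    refine ⟨⟨x, by simpa using h⟩, ?_⟩
    intro h0
    exact hx (congrArg Subtype.val h0)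
  omega

lemma aux_rank_ge {m n : ℕ} (A : Matrix (Fin m) (Fin n) ℝ) (r : Fin n)
    (h : ∀ x, A *ᵥ x = 0 → x r = 0 → x = 0) : n ≤ A.rank + 1 := by
  have h1 := aux_rank_nullity A
  have h2 : Module.finrank ℝ (LinearMap.ker A.mulVecLin) ≤ Module.finrank ℝ ℝ := by
    apply LinearMap.finrank_le_finrank_of_injective
      (f := (LinearMap.proj r : (Fin n → ℝ) →ₗ[ℝ] ℝ).comp (LinearMap.ker A.mulVecLin).subtype)
    rw [← LinearMap.ker_eq_bot, LinearMap.ker_eq_bot']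
    rintro ⟨x, hx⟩ h0
    apply Subtype.ext
    exact h x (by simpa using hx) (by simpa using h0)
  rw [Module.finrank_self] at h2
  omega

lemma aux_rank_mul {l m n : ℕ} (A : Matrix (Fin l) (Fin m) ℝ) (B : Matrix (Fin m) (Fin n) ℝ)
    (h : ∀ x, A *ᵥ x = 0 → x = 0) : (A * B).rank = B.rank := by
  have hi : Function.Injective A.mulVecLin := by
    rw [← LinearMap.ker_eq_bot, LinearMap.ker_eq_bot']
    intro x hx
    exact h x (by simpa using hx)
  unfold Matrix.rank
  rw [Matrix.mulVecLin_mul, LinearMap.range_comp]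
  exact (Submodule.equivMapOfInjective _ hi _).finrank_eq.symm

lemma aux_EsT {N M : ℕ} (head tail : Fin M → Fin N) (σ : Fin M → ℝ)
    (hht : ∀ k, head k ≠ tail k) (x : Fin N → ℝ) (k : Fin M) :
    ((Es head tail σ)ᵀ *ᵥ x) k = x (head k) - σ k * x (tail k) := by
  have h : ∀ i, (if i = head k then 1 else if i = tail k then -σ k else 0) * x i
      = (if i = head k then x i else 0) + (if i = tail k then -σ k * x i else 0) := by
    intro i
    by_cases h1 : i = head k
    · have : i ≠ tail k := fun h => hht k (h1.symm.trans h)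
      simp [h1, hht k]
    · by_cases h2 : i = tail k
      · simp [h2, (hht k).symm]
      · simp [h1, h2]
  simp only [Matrix.mulVec, dotProduct, Matrix.transpose_apply, Es, Matrix.of_apply, h]
  rw [Finset.sum_add_distrib]
  simp
  ring

lemma aux_EinT {N M : ℕ} (head tail : Fin M → Fin N) (σ : Fin M → ℝ)
    (x : Fin N → ℝ) (k : Fin M) :
    ((Ein head tail σ)ᵀ *ᵥ x) k = - σ k * x (tail k) := by
  simp [Matrix.mulVec, dotProduct, Ein]

lemma aux_Ls {N M : ℕ} (head tail : Fin M → Fin N) (σ : Fin M → ℝ)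
    (hht : ∀ k, head k ≠ tail k) (hσ : ∀ k, σ k = 1 ∨ σ k = -1) (x : Fin N → ℝ) (i : Fin N) :
    (Ls head tail σ *ᵥ x) i = ∑ k, if i = tail k then x i - σ k * x (head k) else 0 := by
  unfold Ls
  rw [← Matrix.mulVec_mulVec]
  simp only [Matrix.mulVec, dotProduct]
  apply Finset.sum_congr rfl
  intro k _
  have := aux_EsT head tail σ hht x k
  simp only [Matrix.mulVec, dotProduct] at this
  rw [this]
  by_cases h : i = tail k
  · rcases hσ k with h1 | h1 <;> simp [Ein, h, h1]
    ring
  · simp [Ein, h]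

lemma aux_max {N M : ℕ} (head tail : Fin M → Fin N) (σ : Fin M → ℝ)
    (hht : ∀ k, head k ≠ tail k) (hσ : ∀ k, σ k = 1 ∨ σ k = -1) (x : Fin N → ℝ)
    (hx : Ls head tail σ *ᵥ x = 0) (m : ℝ) (hm : ∀ j, |x j| ≤ m) (k : Fin M)
    (hk : |x (tail k)| = m) : x (tail k) = σ k * x (head k) := by
  have h1 := aux_Ls head tail σ hht hσ x (tail k)
  rw [hx] at h1
  have h2 : ∑ l, x (tail k) * (if tail k = tail l then x (tail k) - σ l * x (head l) else 0) = 0 := by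
    rw [← Finset.mul_sum, ← h1]; simp
  have key : ∀ l, σ l * (x (tail k) * x (head l)) ≤ x (tail k) * x (tail k) := by
    intro l
    have a1 : |x (tail k) * x (head l)| ≤ |x (tail k)| * |x (tail k)| := by
      rw [abs_mul]
      exact mul_le_mul_of_nonneg_left (hk ▸ hm _) (abs_nonneg _)
    rw [abs_mul_abs_self] at a1
    have := abs_le.1 a1
    rcases hσ l with h | h <;> rw [h] <;> linarith [this.1, this.2]
  rw [Finset.sum_eq_zero_iff_of_nonneg] at h2
  · have h3 := h2 k (Finset.mem_univ _)
    simp only [if_true] at h3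
    rcases mul_eq_zero.1 h3 with h4 | h4
    · have : m = 0 := by rw [← hk, h4, abs_zero]
      have h5 := hm (head k)
      rw [this] at h5
      rw [h4, abs_nonpos_iff.1 h5, mul_zero]
    · linarith
  · intro l _
    split_ifs
    · have := key l
      linarith
    · simp

lemma aux_back {N M : ℕ} (head tail : Fin M → Fin N) (σ : Fin M → ℝ)
    (hht : ∀ k, head k ≠ tail k) (hσ : ∀ k, σ k = 1 ∨ σ k = -1) (x : Fin N → ℝ)
    (hx : Ls head tail σ *ᵥ x = 0) (m : ℝ) (hm : ∀ j, |x j| ≤ m) (a b : Fin N)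
    (hab : Reaches head tail a b) (hb : |x b| = m) : |x a| = m := by
  induction hab using Relation.ReflTransGen.head_induction_on with
  | refl => exact hb
  | head h _ ih =>
    obtain ⟨k, rfl, rfl⟩ := h
    have := aux_max head tail σ hht hσ x hx m hm k ih
    rw [← ih, this]
    rcases hσ k with h | h <;> simp [h]

lemma aux_tree_back {N M : ℕ} (head tail : Fin M → Fin N) (σ : Fin M → ℝ)
    (hht : ∀ k, head k ≠ tail k) (hσ : ∀ k, σ k = 1 ∨ σ k = -1) (r : Fin N)
    (hr : ∀ b, Reaches head tail r b) (x : Fin N → ℝ)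
    (hx : Ls head tail σ *ᵥ x = 0) (j : Fin N) : |x j| ≤ |x r| := by
  obtain ⟨i, -, hi⟩ := Finset.exists_max_image Finset.univ (fun j => |x j|) ⟨r, Finset.mem_univ _⟩
  have := aux_back head tail σ hht hσ x hx (|x i|) (fun j => hi j (Finset.mem_univ _)) r i (hr i) rfl
  rw [this]
  exact hi j (Finset.mem_univ _)

lemma aux_Es_inj {N M : ℕ} (head tail : Fin M → Fin N) (σ : Fin M → ℝ)
    (hht : ∀ k, head k ≠ tail k) (hσ : ∀ k, σ k = 1 ∨ σ k = -1)
    (hSUB : ¬ StructBalanced head tail σ) (r : Fin N)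
    (hr : ∀ b, Reaches head tail r b) (x : Fin N → ℝ)
    (hx : (Es head tail σ)ᵀ *ᵥ x = 0) : x = 0 := by
  have h1 : ∀ k, x (head k) = σ k * x (tail k) := by
    intro k
    have := aux_EsT head tail σ hht x k
    rw [hx] at this
    simp only [Pi.zero_apply] at this
    linarith
  have h2 : ∀ b, |x b| = |x r| := by
    intro b
    induction hr b with
    | refl => rfl
    | tail _ h ih =>
      obtain ⟨k, rfl, rfl⟩ := h
      rw [← ih, h1 k]
      rcases hσ k with h | h <;> simp [h]
  by_cases h0 : x r = 0
  · funext b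
    have := h2 b
    rw [h0, abs_zero, abs_eq_zero] at this
    exact this
  · exfalso
    apply hSUB
    refine ⟨fun i => x i / x r, fun i => ?_, fun k => ?_⟩
    · rcases abs_eq_abs.1 (h2 i) with h | h <;> simp [h, h0, neg_div]
    · have h3 : x (tail k) * x (tail k) = x r * x r := by
        rw [← abs_mul_abs_self, h2, abs_mul_abs_self]
      simp only [h1 k]
      field_simp
      rw [pow_two, pow_two, h3]

lemma aux_scc_inj {N M : ℕ} (head tail : Fin M → Fin N) (σ : Fin M → ℝ)
    (hht : ∀ k, head k ≠ tail k) (hσ : ∀ k, σ k = 1 ∨ σ k = -1) (r : Fin N)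
    (hr : ∀ b, Reaches head tail r b) (S : Finset (Fin N)) (hS : IsRootedSCC head tail S)
    (hrS : r ∈ S) (hb : ¬ SCCBalanced head tail σ S) (x : Fin N → ℝ)
    (hx : Ls head tail σ *ᵥ x = 0) : x = 0 := by
  have hm := aux_tree_back head tail σ hht hσ r hr x hx
  by_cases h0 : x r = 0
  · funext b
    have := hm b
    rw [h0, abs_zero] at this
    exact abs_nonpos_iff.1 this
  · exfalso
    have h2 : ∀ i ∈ S, |x i| = |x r| := fun i hi =>
      aux_back head tail σ hht hσ x hx _ hm i r (hS.2.2 i hi r hrS) rfl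
    apply hb
    refine ⟨fun i => x i / x r, fun i hi => ?_, fun k hk hk' => ?_⟩
    · rcases abs_eq_abs.1 (h2 i hi) with h | h <;> simp [h, h0, neg_div]
    · have h3 : x (head k) * x (head k) = x r * x r := by
        rw [← abs_mul_abs_self, h2 _ hk, abs_mul_abs_self]
      have h1 := aux_max head tail σ hht hσ x hx _ hm k (h2 _ hk')
      simp only [h1]
      field_simp
      rw [pow_two, pow_two, h3]

lemma aux_pred_closed {N M : ℕ} (head tail : Fin M → Fin N) (S : Finset (Fin N))
    (hS : ∀ k, tail k ∈ S → head k ∈ S) (a b : Fin N) (hab : Reaches head tail a b)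
    (hb : b ∈ S) : a ∈ S := by
  induction hab using Relation.ReflTransGen.head_induction_on with
  | refl => exact hb
  | head h _ ih =>
    obtain ⟨k, rfl, rfl⟩ := h
    exact hS k ih

lemma aux_root_eq {N M : ℕ} (head tail : Fin M → Fin N) (i a : Fin N)
    (hi : IsRootNode tail i) (h : Reaches head tail a i) : a = i := by
  rcases Relation.ReflTransGen.cases_tail h with h | ⟨c, _, k, _, hk⟩
  · exact h.symm
  · exact absurd hk (hi k)

lemma aux_singular {N M : ℕ} (head tail : Fin M → Fin N) (σ : Fin M → ℝ)
    (hht : ∀ k, head k ≠ tail k) (hσ : ∀ k, σ k = 1 ∨ σ k = -1) (r : Fin N)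
    (S : Finset (Fin N)) (hS : ∀ k, tail k ∈ S → head k ∈ S)
    (hrS : r ∈ S) (hb : SCCBalanced head tail σ S) : (Ls head tail σ).det = 0 := by
  obtain ⟨d, hd, hd'⟩ := hb
  set L := Ls head tail σ with hL
  have hrow : ∀ i ∈ S, ∀ x : Fin N → ℝ, (∀ j ∈ S, x j = 0) → (L *ᵥ x) i = 0 := by
    intro i hi x hx
    rw [hL, aux_Ls head tail σ hht hσ]
    apply Finset.sum_eq_zero
    intro k _
    split_ifs with h
    · rw [hx i hi, hx _ (hS k (h ▸ hi))]; simp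
    · rfl
  have hzero : ∀ i ∈ S, ∀ j, j ∉ S → L i j = 0 := by
    intro i hi j hj
    have := hrow i hi (Pi.single j 1) (fun l hl => by
      rw [Pi.single_apply, if_neg]; rintro rfl; exact hj hl)
    simpa using this
  have hdz : ∀ i ∈ S, ∑ j ∈ S, L i j * d j = 0 := by
    intro i hi
    have h1 : (L *ᵥ d) i = 0 := by
      rw [hL, aux_Ls head tail σ hht hσ]
      apply Finset.sum_eq_zero
      intro k _
      split_ifs with h
      · have hh := hS k (h ▸ hi)
        rw [← hd' k hh (h ▸ hi), h]
        rcases hd _ hh with h | h <;> rw [h] <;> ring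
      · rfl
    rw [← h1]
    simp only [Matrix.mulVec, dotProduct]
    apply Finset.sum_subset (Finset.subset_univ _)
    intro j _ hj
    rw [hzero i hi j hj, zero_mul]
  rw [Matrix.twoBlockTriangular_det' L (fun i => i ∈ S) hzero]
  have : (L.toSquareBlockProp (fun i => i ∈ S)).det = 0 := by
    rw [← Matrix.exists_mulVec_eq_zero_iff]
    refine ⟨fun i => d i, ?_, ?_⟩
    · intro h
      have := congrFun h ⟨r, hrS⟩
      simp only [Pi.zero_apply] at this
      rcases hd r hrS with h | h <;> rw [h] at this <;> norm_num at this
    · funext i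
      have := hdz i i.2
      rw [← Finset.sum_coe_sort] at this
      simpa [Matrix.mulVec, dotProduct, Matrix.toSquareBlockProp] using this
  apply mul_eq_zero_of_left
  convert this

theorem rank_laplacians_SUB_spanning_tree {N M : ℕ}
    (head tail : Fin M → Fin N) (σ : Fin M → ℝ)
    (hht : ∀ k, head k ≠ tail k)
    (hinj : ∀ k k', head k = head k' → tail k = tail k' → k = k')
    (hσ : ∀ k, σ k = 1 ∨ σ k = -1)
    (hdss : ∀ k k', head k = tail k' → tail k = head k' → σ k = σ k')
    (hSUB : ¬ StructBalanced head tail σ)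
    (htree : HasSpanningTree head tail) :
    ((Ls head tail σ).rank = (Les head tail σ).rank ↔
      ((∃ S, IsRootedSCC head tail S ∧ ¬ SCCBalanced head tail σ S) ∨
        ∃ i, IsRootNode tail i)) ∧
    ((∃ S, IsRootedSCC head tail S ∧ ¬ SCCBalanced head tail σ S) →
      (Ls head tail σ).rank = N ∧ (Les head tail σ).rank = N) ∧
    ((∃ i, IsRootNode tail i) →
      (Ls head tail σ).rank = N - 1 ∧ (Les head tail σ).rank = N - 1) := by
  classical
  obtain ⟨r, hr⟩ := htree
  have hLes : (Les head tail σ).rank = ((Ein head tail σ)ᵀ).rank := by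
    rw [Matrix.rank_transpose]
    exact aux_rank_mul _ _ (aux_Es_inj head tail σ hht hσ hSUB r hr)
  have hσ0 : ∀ k, σ k ≠ 0 := by
    intro k
    rcases hσ k with h | h <;> rw [h] <;> norm_num
  have hE : ∀ x, (Ein head tail σ)ᵀ *ᵥ x = 0 → ∀ k, x (tail k) = 0 := by
    intro x hx k
    have := aux_EinT head tail σ x k
    rw [hx] at this
    simpa [hσ0 k] using this
  -- no root node: edge Laplacian of rank N
  have hnoroot : (¬ ∃ i, IsRootNode tail i) → (Les head tail σ).rank = N := by
    intro hno
    rw [hLes]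
    apply aux_rank_full
    intro x hx
    funext i
    by_contra hxi
    apply hno
    refine ⟨i, fun k hk => hxi ?_⟩
    rw [← hk]
    exact hE x hx k
  have hscc : (∃ S, IsRootedSCC head tail S ∧ ¬ SCCBalanced head tail σ S) →
      (Ls head tail σ).rank = N ∧ (Les head tail σ).rank = N := by
    rintro ⟨S, hS, hb⟩
    obtain ⟨a, ha, b, hb', hab⟩ := Finset.one_lt_card.1 (show 1 < S.card from hS.1)
    have hrS : r ∈ S := aux_pred_closed head tail S hS.2.1 r a (hr a) ha
    refine ⟨aux_rank_full _ (aux_scc_inj head tail σ hht hσ r hr S hS hrS hb), ?_⟩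
    apply hnoroot
    rintro ⟨i, hi⟩
    have hir := aux_root_eq head tail i r hi (hr i)
    subst hir
    have h1 := aux_root_eq head tail r a hi (hS.2.2 a ha r hrS)
    have h2 := aux_root_eq head tail r b hi (hS.2.2 b hb' r hrS)
    exact hab (h1.trans h2.symm)
  have hroot : (∃ i, IsRootNode tail i) →
      (Ls head tail σ).rank = N - 1 ∧ (Les head tail σ).rank = N - 1 := by
    rintro ⟨i, hi⟩
    have hir := aux_root_eq head tail i r hi (hr i)
    subst hir
    have h1 : ((Ein head tail σ)ᵀ).rank + 1 ≤ N := by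
      apply aux_rank_lt _ (Pi.single r 1)
      · intro h
        have := congrFun h r
        simp at this
      · funext k
        rw [aux_EinT, Pi.single_apply, if_neg (hi k)]
        simp
    have h2 : N ≤ ((Ein head tail σ)ᵀ).rank + 1 := by
      apply aux_rank_ge _ r
      intro x hx hxr
      funext j
      by_cases hj : IsRootNode tail j
      · rw [← aux_root_eq head tail j r hj (hr j)]
        exact hxr
      · unfold IsRootNode at hj
        push Not at hj
        obtain ⟨k, hk⟩ := hj
        rw [← hk]
        exact hE x hx k
    have h3 : (Ls head tail σ).rank ≤ ((Ein head tail σ)ᵀ).rank := by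
      rw [Matrix.rank_transpose]
      exact Matrix.rank_mul_le_left _ _
    have h4 : N ≤ (Ls head tail σ).rank + 1 := by
      apply aux_rank_ge _ r
      intro x hx hxr
      funext j
      have := aux_tree_back head tail σ hht hσ r hr x hx j
      rw [hxr, abs_zero] at this
      exact abs_nonpos_iff.1 this
    omega
  refine ⟨⟨fun heq => ?_, ?_⟩, hscc, hroot⟩
  · by_contra hcon
    push Not at hcon
    obtain ⟨hc1, hc2⟩ := hcon
    have h1 := hnoroot (by rintro ⟨i, hi⟩; exact hc2 i hi)
    have hSm : ∀ a, a ∈ Finset.univ.filter (fun a => Reaches head tail a r) ↔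
        Reaches head tail a r := by simp
    set S := Finset.univ.filter (fun a => Reaches head tail a r) with hSdef
    have hrS : r ∈ S := (hSm r).2 Relation.ReflTransGen.refl
    have hcl : ∀ k, tail k ∈ S → head k ∈ S := by
      intro k hk
      rw [hSm] at hk ⊢
      exact Relation.ReflTransGen.head ⟨k, rfl, rfl⟩ hk
    have hS : IsRootedSCC head tail S := by
      refine ⟨?_, hcl, ?_⟩
      · have := hc2 r
        unfold IsRootNode at this
        push Not at this
        obtain ⟨k, hk⟩ := this
        apply Finset.one_lt_card.2
        exact ⟨head k, hcl k (hk ▸ hrS), tail k, hk ▸ hrS, hht k⟩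
      · intro a ha b _
        exact Relation.ReflTransGen.trans ((hSm a).1 ha) (hr b)
    have hdet := aux_singular head tail σ hht hσ r S hcl hrS (hc1 S hS)
    obtain ⟨x, hx, hx0⟩ := Matrix.exists_mulVec_eq_zero_iff.2 hdet
    have := aux_rank_lt _ x hx hx0
    omega
  · rintro (h | h)
    · rw [(hscc h).1, (hscc h).2]
    · rw [(hroot h).1, (hroot h).2]
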